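/- arXiv:2510.19381 — 9 statements merged into one kernel-verified Lean document; each statement's English description precedes it below -/
import Mathlib

section
/- Let n ≥ 2 and m ≥ 1 be integers. The function g : [0,∞) → ℝ defined by g(s) = ((s+n-1)/(2s+n)) · (1 - 1/(2s+n))^{n+m-1} is strictly increasing on [0,∞). In particular, for every integer k ≥ 0, g(k) ≥ g(0) = ((n-1)/n) · (1 - 1/n)^{n+m-1}. -/
/-- The Bernoulli inequality makes `(1 + c t) (1 - t) ^ N` strictly decreasing for `c < N`. -/
lemma aux_decreasing (c : ℝ) (N : ℕ) (hc : 0 ≤ c) (hN : c < N) (t u : ℝ) (ht : 0 ≤ t)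
    (htu : t < u) (hu : u < 1) :
    (1 + c * u) * (1 - u) ^ N < (1 + c * t) * (1 - t) ^ N := by
  have h1u : 0 < 1 - u := by linarith
  have hd : 0 < u - t := by linarith
  have ha : u - t ≤ (u - t) / (1 - u) := by
    rw [le_div_iff₀ h1u]
    nlinarith [mul_nonneg hd.le (ht.trans htu.le)]
  have hb := one_add_mul_le_pow (a := (u - t) / (1 - u)) (by linarith) N
  have hq : 1 - t = (1 + (u - t) / (1 - u)) * (1 - u) := by
    field_simp
    ring
  rw [hq, mul_pow, ← mul_assoc]
  apply mul_lt_mul_of_pos_right _ (pow_pos h1u N)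
  have hN0 : (0 : ℝ) ≤ N := hc.trans hN.le
  have h1 : 1 + (N : ℝ) * (u - t) ≤ (1 + (u - t) / (1 - u)) ^ N :=
    le_trans (by linarith [mul_le_mul_of_nonneg_left ha hN0]) hb
  have hct : 0 ≤ c * t := mul_nonneg hc ht
  have h2 := mul_le_mul_of_nonneg_left h1 (by linarith : 0 ≤ 1 + c * t)
  have h3 : 0 < ((N : ℝ) - c) * (u - t) := mul_pos (by linarith) hd
  have h4 : 0 ≤ (c * t) * (N * (u - t)) := by positivity
  nlinarith

theorem strictMonoOn_quotient_function (n m : ℕ) (hn : 2 ≤ n) (hm : 1 ≤ m) :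
    StrictMonoOn
      (fun s : ℝ => ((s + n - 1) / (2 * s + n)) * (1 - 1 / (2 * s + n)) ^ (n + m - 1))
      (Set.Ici (0 : ℝ)) ∧
    ((((0 : ℝ) + n - 1) / (2 * 0 + n)) * (1 - 1 / (2 * 0 + n)) ^ (n + m - 1)
        = (((n : ℝ) - 1) / n) * (1 - 1 / (n : ℝ)) ^ (n + m - 1)) ∧
    (∀ k : ℕ, (((n : ℝ) - 1) / n) * (1 - 1 / (n : ℝ)) ^ (n + m - 1) ≤
      (((k : ℝ) + n - 1) / (2 * (k : ℝ) + n)) *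
        (1 - 1 / (2 * (k : ℝ) + n)) ^ (n + m - 1)) := by
  have hn2 : (2 : ℝ) ≤ n := by exact_mod_cast hn
  have key : StrictMonoOn
      (fun s : ℝ => ((s + n - 1) / (2 * s + n)) * (1 - 1 / (2 * s + n)) ^ (n + m - 1))
      (Set.Ici (0 : ℝ)) := by
    intro a ha b hb hab
    simp only [Set.mem_Ici] at ha hb
    have hcN : (n : ℝ) - 2 < ((n + m - 1 : ℕ) : ℝ) := by
      have : (n : ℝ) ≤ ((n + m - 1 : ℕ) : ℝ) := by exact_mod_cast (by omega)
      linarith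
    have e : ∀ s : ℝ, 0 ≤ s →
        (s + n - 1) / (2 * s + n) = (1 + ((n : ℝ) - 2) * (1 / (2 * s + n))) / 2 := by
      intro s hs
      have : 2 * s + (n : ℝ) ≠ 0 := by linarith
      field_simp
      ring
    have h := aux_decreasing ((n : ℝ) - 2) (n + m - 1) (by linarith) hcN
      (1 / (2 * b + n)) (1 / (2 * a + n)) (by positivity)
      (one_div_lt_one_div_of_lt (by linarith) (by linarith))
      (by rw [div_lt_one (by linarith)]; linarith)
    simp only [e a ha, e b hb]
    linarith
  refine ⟨key, by simp, fun k => ?_⟩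
  have h := key.monotoneOn (Set.mem_Ici.2 le_rfl) (Set.mem_Ici.2 (Nat.cast_nonneg k))
    (Nat.cast_nonneg k)
  simpa only [mul_zero, zero_add] using h
end

section
/- For all integers n ≥ 2 and m ≥ 1, c_{n,m} ≥ (1/n) · (1 - 1/n)^{n+m-1} · c_{n-1,m}. -/
/-- The series `c_{n,m} = ∑_{k≥0} binom(k+n-1, k) / (2k+n)^{n+m}`. -/
noncomputable def seriesC (n m : ℕ) : ℝ :=
  ∑' k : ℕ, ((k + n - 1).choose k : ℝ) / (2 * (k : ℝ) + n) ^ (n + m)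

lemma aux_choose (k p : ℕ) :
    ((k + p + 1).choose k : ℝ) * (p + 1) = ((k + p).choose k : ℝ) * (k + p + 1) := by
  have h := Nat.add_one_mul_choose_eq (k + p) p
  have h1 : (k + p).choose k = (k + p).choose p := Nat.choose_symm_add
  have h2 : (k + (p + 1)).choose k = (k + (p + 1)).choose (p + 1) := Nat.choose_symm_add
  rw [← add_assoc] at h2
  rw [h1, h2]
  have h' : ((k + p + 1 : ℕ) : ℝ) * ((k + p).choose p : ℝ)
      = ((k + p + 1).choose (p + 1) : ℝ) * ((p + 1 : ℕ) : ℝ) := by exact_mod_cast h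
  push_cast at h'
  linarith

lemma aux_poly (k p : ℝ) (hk : 0 ≤ k) (hp : 0 ≤ p) :
    (2 * k + p + 2) * (p + 1) ≤
      (p + 2) * (k + p + 1) * (1 + (p + 2) * (2 * k / ((2 * k + p + 2) * (p + 1)))) := by
  have hD : 0 < (2 * k + p + 2) * (p + 1) := by positivity
  have e : (p + 2) * (k + p + 1) * (1 + (p + 2) * (2 * k / ((2 * k + p + 2) * (p + 1))))
      = (p + 2) * (k + p + 1) * ((2 * k + p + 2) * (p + 1) + (p + 2) * (2 * k))
        / ((2 * k + p + 2) * (p + 1)) := by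
    field_simp
  rw [e, le_div_iff₀ hD, ← sub_nonneg]
  ring_nf
  positivity

lemma aux_term (k p m : ℕ) (hm : 1 ≤ m) :
    (1 / ((p : ℝ) + 2)) * (1 - 1 / ((p : ℝ) + 2)) ^ (p + 1 + m) *
      (((k + p).choose k : ℝ) / (2 * (k : ℝ) + (p + 1)) ^ (p + 1 + m)) ≤
    ((k + p + 1).choose k : ℝ) / (2 * (k : ℝ) + (p + 2)) ^ (p + 2 + m) := by
  have hc := aux_choose k p
  have hk : (0 : ℝ) ≤ k := k.cast_nonneg
  have hp : (0 : ℝ) ≤ p := p.cast_nonneg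
  have hpoly := aux_poly k p hk hp
  set r : ℝ := 2 * k / ((2 * k + p + 2) * (p + 1)) with hr
  have hr0 : 0 ≤ r := by positivity
  have hB : (0 : ℝ) ≤ ((k + p).choose k : ℝ) := Nat.cast_nonneg _
  set B : ℝ := ((k + p).choose k : ℝ)
  have hA : ((k + p + 1).choose k : ℝ) = B * (k + p + 1) / (p + 1) := by
    rw [eq_div_iff (by positivity)]; exact hc
  have hbern : 1 + ((p : ℝ) + 2) * r ≤ (1 + r) ^ (p + 1 + m) := by
    have h1 := one_add_mul_le_pow (a := r) (by linarith) (p + 1 + m)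
    have hm' : (1 : ℝ) ≤ m := by exact_mod_cast hm
    push_cast at h1
    nlinarith
  have hkey : (2 * (k : ℝ) + p + 2) * (p + 1) ≤
      (p + 2) * (k + p + 1) * (1 + r) ^ (p + 1 + m) :=
    hpoly.trans (mul_le_mul_of_nonneg_left hbern (by positivity))
  have e1 : 1 - 1 / ((p : ℝ) + 2) = (p + 1) / (p + 2) := by field_simp; ring
  have e2 : 1 / (2 * (k : ℝ) + (p + 2)) =
      ((p + 1) / (p + 2) / (2 * (k : ℝ) + (p + 1))) * (1 + r) := by
    rw [hr]; field_simp; ring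
  set E := p + 1 + m
  set u : ℝ := (((p : ℝ) + 1) / (p + 2) / (2 * (k : ℝ) + (p + 1))) ^ E with hu
  have hu0 : 0 ≤ u := by positivity
  have hE : p + 2 + m = E + 1 := by omega
  have L : (1 / ((p : ℝ) + 2)) * (1 - 1 / ((p : ℝ) + 2)) ^ E *
      (B / (2 * (k : ℝ) + (p + 1)) ^ E) = u * B * (1 / (p + 2)) := by
    rw [e1, hu, div_pow _ (2 * (k : ℝ) + (p + 1))]; ring
  have R : ((k + p + 1).choose k : ℝ) / (2 * (k : ℝ) + (p + 2)) ^ (p + 2 + m)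
      = u * B * ((k + p + 1) * (1 + r) ^ E / ((2 * k + p + 2) * (p + 1))) := by
    have e3 : 1 / (2 * (k : ℝ) + (p + 2)) ^ E = u * (1 + r) ^ E := by
      rw [hu, ← mul_pow, ← e2, one_div_pow]
    have : ((k + p + 1).choose k : ℝ) / (2 * (k : ℝ) + (p + 2)) ^ (E + 1)
      = ((k + p + 1).choose k : ℝ) * (1 / (2 * (k : ℝ) + (p + 2)) ^ E)
        / (2 * (k : ℝ) + (p + 2)) := by
      field_simp
      ring
    rw [hE, this, e3, hA]
    field_simp
    ring
  rw [L, R]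
  apply mul_le_mul_of_nonneg_left _ (by positivity)
  rw [div_le_div_iff₀ (by positivity) (by positivity)]
  linarith

lemma aux_summable (p m : ℕ) (hm : 1 ≤ m) :
    Summable fun k : ℕ =>
      ((k + p + 1).choose k : ℝ) / (2 * (k : ℝ) + (p + 2)) ^ (p + 2 + m) := by
  have h0 : Summable fun k : ℕ => (1 : ℝ) / ((k + 1 : ℕ) : ℝ) ^ 2 :=
    (summable_nat_add_iff 1).2 (Real.summable_one_div_nat_pow.2 one_lt_two)
  refine Summable.of_nonneg_of_le (fun k => by positivity) (fun k => ?_) h0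
  have hk : (0 : ℝ) ≤ k := k.cast_nonneg
  have hp : (0 : ℝ) ≤ p := p.cast_nonneg
  have h2 : (k + (p + 1)).choose k = (k + (p + 1)).choose (p + 1) := Nat.choose_symm_add
  have h3 : ((k + p + 1).choose k : ℝ) ≤ (2 * (k : ℝ) + (p + 2)) ^ (p + 1) := by
    rw [add_assoc, h2]
    calc ((k + (p + 1)).choose (p + 1) : ℝ) ≤ ((k + (p + 1) : ℕ) : ℝ) ^ (p + 1) := by
          exact_mod_cast Nat.choose_le_pow _ _
      _ ≤ _ := by
          apply pow_le_pow_left₀ (by positivity)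
          push_cast; linarith
  have h4 : ((k + 1 : ℕ) : ℝ) ^ 2 ≤ (2 * (k : ℝ) + (p + 2)) ^ (m + 1) := by
    calc ((k + 1 : ℕ) : ℝ) ^ 2 ≤ (2 * (k : ℝ) + (p + 2)) ^ 2 := by
          apply pow_le_pow_left₀ (by positivity)
          push_cast; linarith
      _ ≤ _ := pow_le_pow_right₀ (by linarith) (by omega)
  rw [div_le_div_iff₀ (by positivity) (by positivity), one_mul,
    show p + 2 + m = (p + 1) + (m + 1) by omega, pow_add]
  exact mul_le_mul h3 h4 (by positivity) (by positivity)

theorem seriesC_ratio_lower_bound (n m : ℕ) (hn : 2 ≤ n) (hm : 1 ≤ m) :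
    (1 / (n : ℝ)) * (1 - 1 / (n : ℝ)) ^ (n + m - 1) * seriesC (n - 1) m ≤ seriesC n m := by
  obtain ⟨p, rfl⟩ : ∃ p, n = p + 2 := ⟨n - 2, by omega⟩
  have hE : p + 2 + m - 1 = p + 1 + m := by omega
  have e1 : seriesC (p + 2 - 1) m =
      ∑' k : ℕ, ((k + p).choose k : ℝ) / (2 * (k : ℝ) + (p + 1)) ^ (p + 1 + m) := by
    unfold seriesC
    refine tsum_congr fun k => ?_
    rw [show p + 2 - 1 = p + 1 by omega, show k + (p + 1) - 1 = k + p by omega]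
    push_cast; rfl
  have e2 : seriesC (p + 2) m =
      ∑' k : ℕ, ((k + p + 1).choose k : ℝ) / (2 * (k : ℝ) + (p + 2)) ^ (p + 2 + m) := by
    unfold seriesC
    refine tsum_congr fun k => ?_
    rw [show k + (p + 2) - 1 = k + p + 1 by omega]
    push_cast; rfl
  rw [e1, e2, hE, ← tsum_mul_left]
  push_cast
  have hs := aux_summable p m hm
  have hnn : (0 : ℝ) ≤ 1 - 1 / ((p : ℝ) + 2) := by
    rw [sub_nonneg, div_le_one (by positivity)]
    have hp : (0 : ℝ) ≤ p := p.cast_nonneg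
    linarith
  refine Summable.tsum_le_tsum (fun k => aux_term k p m hm) ?_ hs
  exact Summable.of_nonneg_of_le (fun k => by positivity) (fun k => aux_term k p m hm) hs
end

section
/- For all integers n ≥ 2 and m ≥ 1, γ̃_{n,m} ≤ γ̃_{n-1,m} · ((n+m-2)^{n+m-1} (n+m) (2n+m-1)) / (n+m-1)^{n+m+1}. -/
/-- `γ̃_{n,m}`. -/
noncomputable def gammaTilde (n m : ℕ) : ℝ :=
  (1 / (2 : ℝ) ^ ((n : ℤ) - m + 1)) *
    (((n : ℝ) + m) / ((n : ℝ) ^ (n + m) * ((n : ℝ) + m - 1) ^ (n + m))) *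
    (Real.Gamma ((m : ℝ) / 2) * Real.Gamma (2 * (n : ℝ) + m) /
      Real.Gamma ((n : ℝ) + m / 2)) *
    (1 / seriesC n m)

lemma key_ineq (r q k : ℕ) (A B : ℝ) (hA : A = 1 + 2 * k / ((r : ℝ) + 2))
    (hB : B = 1 + 2 * k / ((r : ℝ) + 1)) :
    A ^ (r + q + 3) ≤ B ^ (r + q + 2) * ((k + r + 1) / ((r : ℝ) + 1)) := by
  have hk : (0 : ℝ) ≤ k := by positivity
  have hr : (0 : ℝ) ≤ r := by positivity
  have hA1 : 1 ≤ A := by rw [hA]; have : 0 ≤ 2 * k / ((r : ℝ) + 2) := by positivity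
                         linarith
  have hA0 : 0 < A := by linarith
  have hAB : A ≤ B := by
    rw [hA, hB]; gcongr; norm_num
  have hd : ((r : ℝ) + 2) * (B - A) = B - 1 := by
    rw [hA, hB]; field_simp; ring
  have hf : (k + r + 1) / ((r : ℝ) + 1) = (1 + B) / 2 := by
    rw [hB]; field_simp; ring
  have hbern : 1 + ((r + q + 2 : ℕ) : ℝ) * (B / A - 1) ≤ (B / A) ^ (r + q + 2) := by
    have := one_add_mul_le_pow (a := B / A - 1)
      (by have : 0 ≤ B / A := div_nonneg (by linarith) hA0.le
          linarith) (r + q + 2)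
    simpa using this
  have hx : 0 ≤ B / A - 1 := by
    rw [sub_nonneg, le_div_iff₀ hA0]; linarith
  have h2 : 1 + (B - 1) / A ≤ (B / A) ^ (r + q + 2) := by
    refine le_trans ?_ hbern
    have e : (B - 1) / A = ((r : ℝ) + 2) * (B / A - 1) := by
      rw [← hd]; field_simp
    rw [e]; push_cast
    have hq : (0 : ℝ) ≤ q := by positivity
    nlinarith [mul_nonneg hq hx]
  rw [hf]
  have h3 : A ≤ (1 + (B - 1) / A) * ((1 + B) / 2) := by
    have : (1 + (B - 1) / A) * ((1 + B) / 2) = ((A + B - 1) * (1 + B) / 2) / A := by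
      field_simp; ring
    rw [this, le_div_iff₀ hA0]
    nlinarith
  have h4 : A ≤ (B / A) ^ (r + q + 2) * ((1 + B) / 2) :=
    h3.trans (mul_le_mul_of_nonneg_right h2 (by linarith))
  calc A ^ (r + q + 3) = A ^ (r + q + 2) * A := by ring
    _ ≤ A ^ (r + q + 2) * ((B / A) ^ (r + q + 2) * ((1 + B) / 2)) := by gcongr
    _ = _ := by rw [div_pow]; field_simp

lemma summable_seriesC (r q : ℕ) : Summable (fun k : ℕ =>
    ((k + (r + 1) - 1).choose k : ℝ) / (2 * (k : ℝ) + (r + 1 : ℕ)) ^ ((r + 1) + (q + 1))) := by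
  have hs : Summable (fun k : ℕ => 1 / (((k + 1 : ℕ) : ℝ)) ^ 2) :=
    (summable_nat_add_iff 1).2 (Real.summable_one_div_nat_pow.2 (by norm_num : 1 < 2))
  refine Summable.of_nonneg_of_le (fun k => by positivity) (fun k => ?_) hs
  have hD : (1 : ℝ) ≤ 2 * (k : ℝ) + (r + 1 : ℕ) := by
    push_cast; have : (0 : ℝ) ≤ k := by positivity
    have : (0 : ℝ) ≤ r := by positivity
    linarith
  have h1 : ((k + (r + 1) - 1).choose k : ℝ) ≤ (2 * (k : ℝ) + (r + 1 : ℕ)) ^ r := by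
    have e : (k + (r + 1) - 1).choose k = (k + r).choose r := by
      rw [show k + (r + 1) - 1 = k + r by omega]
      exact Nat.choose_symm_add
    rw [e]
    calc ((k + r).choose r : ℝ) ≤ ((k + r : ℕ) : ℝ) ^ r := by
          exact_mod_cast Nat.choose_le_pow (k + r) r
      _ ≤ _ := by
          gcongr; push_cast; have : (0 : ℝ) ≤ k := by positivity
          linarith
  rw [div_le_div_iff₀ (by positivity) (by positivity), one_mul]
  calc ((k + (r + 1) - 1).choose k : ℝ) * ((k + 1 : ℕ) : ℝ) ^ 2
      ≤ (2 * (k : ℝ) + (r + 1 : ℕ)) ^ r * (2 * (k : ℝ) + (r + 1 : ℕ)) ^ 2 := by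
        gcongr
        push_cast
        have : (0 : ℝ) ≤ k := by positivity
        have : (0 : ℝ) ≤ r := by positivity
        linarith
    _ = (2 * (k : ℝ) + (r + 1 : ℕ)) ^ (r + 2) := by ring
    _ ≤ _ := pow_le_pow_right₀ hD (by omega)

lemma seriesC_pos (r q : ℕ) : 0 < seriesC (r + 1) (q + 1) := by
  refine (summable_seriesC r q).tsum_pos (fun k => by positivity) 0 ?_
  simp only [Nat.choose_zero_right]
  positivity

lemma seriesC_mono (r q : ℕ) :
    ((r + 1 : ℕ) : ℝ) ^ (r + 1 + (q + 1)) * seriesC (r + 1) (q + 1) ≤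
      ((r + 2 : ℕ) : ℝ) ^ (r + 2 + (q + 1)) * seriesC (r + 2) (q + 1) := by
  unfold seriesC
  rw [← tsum_mul_left, ← tsum_mul_left]
  refine Summable.tsum_le_tsum (fun k => ?_) ((summable_seriesC r q).mul_left _)
    ((summable_seriesC (r + 1) q).mul_left _)
  have hkey := key_ineq r q k _ _ rfl rfl
  have hc : ((k + (r + 2) - 1).choose k : ℝ) =
      ((k + (r + 1) - 1).choose k : ℝ) * ((k + r + 1) / ((r : ℝ) + 1)) := by
    rw [show k + (r + 2) - 1 = k + (r + 1) by omega, show k + (r + 1) - 1 = k + r by omega,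
      Nat.choose_symm_add, Nat.choose_symm_add]
    have := Nat.add_one_mul_choose_eq (k + r) r
    have h' : ((k : ℝ) + r + 1) * ((k + r).choose r : ℝ) =
        ((k + (r + 1)).choose (r + 1) : ℝ) * ((r : ℝ) + 1) := by
      exact_mod_cast this
    field_simp
    linarith
  rw [hc]
  set C : ℝ := ((k + (r + 1) - 1).choose k : ℝ)
  have hC : 0 ≤ C := by positivity
  have eA : 1 + 2 * k / ((r : ℝ) + 2) = (2 * k + (r + 2)) / ((r : ℝ) + 2) := by
    field_simp; ring
  have eB : 1 + 2 * k / ((r : ℝ) + 1) = (2 * k + (r + 1)) / ((r : ℝ) + 1) := by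
    field_simp; ring
  rw [eA, eB, div_pow, div_pow] at hkey
  set F : ℝ := (k + r + 1) / ((r : ℝ) + 1)
  push_cast
  rw [show r + 1 + (q + 1) = r + q + 2 by ring, show r + 2 + (q + 1) = r + q + 3 by ring]
  have p1 : (0 : ℝ) < (2 * k + (r + 2)) ^ (r + q + 3) := by positivity
  have p2 : (0 : ℝ) < (2 * k + (r + 1)) ^ (r + q + 2) := by positivity
  have p3 : (0 : ℝ) < ((r : ℝ) + 2) ^ (r + q + 3) := by positivity
  have p4 : (0 : ℝ) < ((r : ℝ) + 1) ^ (r + q + 2) := by positivity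
  generalize (2 * (k : ℝ) + (r + 2)) ^ (r + q + 3) = a at *
  generalize (2 * (k : ℝ) + (r + 1)) ^ (r + q + 2) = b at *
  generalize ((r : ℝ) + 2) ^ (r + q + 3) = c at *
  generalize ((r : ℝ) + 1) ^ (r + q + 2) = d at *
  have h5 : a * d ≤ b * F * c := by
    rw [div_mul_eq_mul_div, div_le_div_iff₀ p3 p4] at hkey
    exact hkey
  rw [mul_div_assoc', mul_div_assoc', div_le_div_iff₀ p2 p1]
  nlinarith [mul_le_mul_of_nonneg_left h5 hC]

theorem gammaTilde_ratio_upper_bound (n m : ℕ) (hn : 2 ≤ n) (hm : 1 ≤ m) :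
    gammaTilde n m ≤
      gammaTilde (n - 1) m *
        ((((n : ℝ) + m - 2) ^ (n + m - 1) * ((n : ℝ) + m) * (2 * (n : ℝ) + m - 1)) /
          ((n : ℝ) + m - 1) ^ (n + m + 1)) := by
  obtain ⟨r, rfl⟩ : ∃ r, n = r + 2 := ⟨n - 2, by omega⟩
  obtain ⟨q, rfl⟩ : ∃ q, m = q + 1 := ⟨m - 1, by omega⟩
  have hmono := seriesC_mono r q
  have c1 := seriesC_pos r q
  have c2 := seriesC_pos (r + 1) q
  rw [show r + 2 - 1 = r + 1 by omega]
  unfold gammaTilde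
  generalize seriesC (r + 1) (q + 1) = s at *
  rw [show r + 1 + 1 = r + 2 by ring] at c2
  generalize seriesC (r + 2) (q + 1) = t at *
  have z : (2 : ℝ) ^ (((r + 2 : ℕ) : ℤ) - (q + 1 : ℕ) + 1) =
      2 * (2 : ℝ) ^ (((r + 1 : ℕ) : ℤ) - (q + 1 : ℕ) + 1) := by
    rw [← zpow_one_add₀ (by norm_num)]; congr 1; push_cast; ring
  have zp : (0 : ℝ) < (2 : ℝ) ^ (((r + 1 : ℕ) : ℤ) - (q + 1 : ℕ) + 1) := by positivity
  rw [z]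
  generalize (2 : ℝ) ^ (((r + 1 : ℕ) : ℤ) - (q + 1 : ℕ) + 1) = Z at *
  push_cast at *
  have hr : (0 : ℝ) ≤ r := by positivity
  have hq : (0 : ℝ) ≤ q := by positivity
  have g1 : Real.Gamma (2 * ((r : ℝ) + 2) + (q + 1)) = (2 * r + q + 4) * ((2 * r + q + 3) *
      Real.Gamma (2 * ((r : ℝ) + 1) + (q + 1))) := by
    rw [show 2 * ((r : ℝ) + 2) + (q + 1) = (2 * r + q + 3 + 1) + 1 by ring,
      Real.Gamma_add_one (by positivity), Real.Gamma_add_one (by positivity)]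
    ring_nf
  have g2 : Real.Gamma ((r : ℝ) + 2 + (q + 1) / 2) = ((r : ℝ) + 1 + (q + 1) / 2) *
      Real.Gamma ((r : ℝ) + 1 + (q + 1) / 2) := by
    rw [← Real.Gamma_add_one (by positivity)]; ring_nf
  rw [g1, g2]
  have q1 : 0 < Real.Gamma (((q : ℝ) + 1) / 2) := Real.Gamma_pos_of_pos (by positivity)
  have q2 : 0 < Real.Gamma (2 * ((r : ℝ) + 1) + (q + 1)) := Real.Gamma_pos_of_pos (by positivity)
  have q3 : 0 < Real.Gamma ((r : ℝ) + 1 + (q + 1) / 2) := Real.Gamma_pos_of_pos (by positivity)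
  generalize Real.Gamma (((q : ℝ) + 1) / 2) = G1 at *
  generalize Real.Gamma (2 * ((r : ℝ) + 1) + (q + 1)) = G2 at *
  generalize Real.Gamma ((r : ℝ) + 1 + (q + 1) / 2) = G3 at *
  rw [show r + 2 + (q + 1) - 1 = r + q + 2 by omega, show r + 2 + (q + 1) + 1 = r + q + 4 by ring,
    show r + 2 + (q + 1) = r + q + 3 by ring, show r + 1 + (q + 1) = r + q + 2 by ring,
    show (r : ℝ) + 2 + (q + 1) - 2 = r + q + 1 by ring,
    show (r : ℝ) + 2 + (q + 1) - 1 = r + q + 2 by ring,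
    show (r : ℝ) + 1 + (q + 1) - 1 = r + q + 1 by ring,
    show (r : ℝ) + 2 + (q + 1) = r + q + 3 by ring,
    show (r : ℝ) + 1 + (q + 1) = r + q + 2 by ring,
    show 2 * ((r : ℝ) + 2) + (q + 1) - 1 = 2 * r + q + 4 by ring,
    show (r : ℝ) + 1 + (q + 1) / 2 = (2 * r + q + 3) / 2 by ring]
  rw [show r + 2 + (q + 1) = r + q + 3 by ring, show r + 1 + (q + 1) = r + q + 2 by ring] at hmono
  have p3 : (0 : ℝ) < ((r : ℝ) + 2) ^ (r + q + 3) := by positivity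
  have p4 : (0 : ℝ) < ((r : ℝ) + 1) ^ (r + q + 2) := by positivity
  have p5 : (0 : ℝ) < ((r : ℝ) + q + 1) ^ (r + q + 2) := by positivity
  have p6 : (0 : ℝ) < ((r : ℝ) + q + 2) ^ (r + q + 3) := by positivity
  rw [show ((r : ℝ) + q + 2) ^ (r + q + 4) = (r + q + 2) ^ (r + q + 3) * (r + q + 2) by ring]
  generalize ((r : ℝ) + 2) ^ (r + q + 3) = a at *
  generalize ((r : ℝ) + 1) ^ (r + q + 2) = b at *
  generalize ((r : ℝ) + q + 1) ^ (r + q + 2) = c at *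
  generalize ((r : ℝ) + q + 2) ^ (r + q + 3) = d at *
  have hinv : 1 / (a * t) ≤ 1 / (b * s) := one_div_le_one_div_of_le (by positivity) hmono
  have hK : 0 ≤ (r + q + 3) * (2 * r + q + 4) * G1 * G2 / (Z * d * G3) := by positivity
  have := mul_le_mul_of_nonneg_left hinv hK
  have n1 : (2 * (r : ℝ) + q + 3) ≠ 0 := by positivity
  have n2 : ((r : ℝ) + q + 2) ≠ 0 := by positivity
  calc _ = (r + q + 3) * (2 * r + q + 4) * G1 * G2 / (Z * d * G3) * (1 / (a * t)) := by
        field_simp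
    _ ≤ _ := this
    _ = _ := by field_simp
end

section
/- For all integers n ≥ 2 and m ≥ 1, ((n+m-2)^{n+m-1} (n+m) (2n+m-1)) / (n+m-1)^{n+m+1} < 1. -/
theorem ratio_bound_lt_one (n m : ℕ) (hn : 2 ≤ n) (hm : 1 ≤ m) :
    (((n : ℝ) + m - 2) ^ (n + m - 1) * ((n : ℝ) + m) * (2 * (n : ℝ) + m - 1)) /
      ((n : ℝ) + m - 1) ^ (n + m + 1) < 1 := by
  obtain ⟨j, hj⟩ : ∃ j, n + m = j + 2 := ⟨n + m - 2, by omega⟩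
  have hj1 : 1 ≤ j := by omega
  have hjr : (1 : ℝ) ≤ j := by exact_mod_cast hj1
  have hc : (n : ℝ) + m = j + 2 := by exact_mod_cast hj
  have hmr : (1 : ℝ) ≤ m := by exact_mod_cast hm
  have e1 : n + m - 1 = j + 1 := by omega
  have e2 : n + m + 1 = j + 3 := by omega
  have e3 : 2 * (n : ℝ) + m - 1 = (j + 1) + n := by linarith
  have e4 : (j : ℝ) + 2 - 2 = j := by ring
  have e5 : (j : ℝ) + 2 - 1 = j + 1 := by ring
  rw [e3, e1, e2, hc, e4, e5, div_lt_one (by positivity)]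
  have hb : 2 * (j : ℝ) ^ j ≤ (j + 1) ^ j := by
    have h := one_add_mul_le_pow (a := 1 / (j : ℝ)) (by
      have : 0 ≤ 1 / (j : ℝ) := by positivity
      linarith) j
    have h2 : (1 : ℝ) + j * (1 / j) = 2 := by field_simp; norm_num
    rw [h2] at h
    calc 2 * (j : ℝ) ^ j ≤ (1 + 1 / (j : ℝ)) ^ j * (j : ℝ) ^ j := by gcongr
      _ = (j + 1) ^ j := by
        rw [← mul_pow]; congr 1; field_simp
  have hnj : (n : ℝ) ≤ j + 1 := by linarith
  calc (j : ℝ) ^ (j + 1) * (j + 2) * (j + 1 + n)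
      ≤ (j : ℝ) ^ (j + 1) * (j + 2) * (j + 1 + (j + 1)) := by gcongr
    _ = 2 * (j : ℝ) ^ j * (j * (j + 2) * (j + 1)) := by ring
    _ ≤ (j + 1) ^ j * (j * (j + 2) * (j + 1)) := by gcongr
    _ < (j + 1) ^ j * (j + 1) ^ 3 := by
      gcongr
      nlinarith
    _ = ((j : ℝ) + 1) ^ (j + 3) := by ring
end

section
/- For every integer m ≥ 2, γ̄_{1,m} ≤ (64/(27e)) · γ̄_{1,m-1}, where e is Euler's number. In particular γ̄_{1,m} < γ̄_{1,m-1}. -/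
/-- `γ̄_{n,m}`. -/
noncomputable def gammaBar (n m : ℕ) : ℝ :=
  (1 / (2 : ℝ) ^ ((n : ℤ) - m + 1)) *
    (((n : ℝ) + m) / ((n : ℝ) + m - 1) ^ (n + m)) *
    (Real.Gamma ((m : ℝ) / 2) * Real.Gamma (2 * (n : ℝ) + m) /
      Real.Gamma ((n : ℝ) + m / 2))

lemma gammaBar_closed (m : ℕ) (hm : 1 ≤ m) :
    gammaBar 1 m = 2 ^ m * (m + 1) * ((m + 1).factorial : ℝ) / (2 * (m : ℝ) ^ (m + 2)) := by
  have hm0 : (0 : ℝ) < m := by exact_mod_cast hm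
  have hG : Real.Gamma ((m : ℝ) / 2) ≠ 0 := (Real.Gamma_pos_of_pos (by positivity)).ne'
  have h1 : Real.Gamma ((1 : ℝ) + m / 2) = (m / 2) * Real.Gamma ((m : ℝ) / 2) := by
    rw [add_comm, Real.Gamma_add_one (by positivity)]
  have h2 : Real.Gamma (2 * (1 : ℝ) + m) = ((m + 1).factorial : ℝ) := by
    rw [← Real.Gamma_nat_eq_factorial]
    congr 1
    push_cast
    ring
  have h3 : (2 : ℝ) ^ ((1 : ℤ) - m + 1) = 4 / 2 ^ m := by
    rw [show (1 : ℤ) - m + 1 = 2 - m by ring, zpow_sub₀ (by norm_num), zpow_natCast]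
    norm_num
  unfold gammaBar
  push_cast
  rw [h1, h2, h3, show (1 : ℝ) + m - 1 = m by ring]
  field_simp
  ring

theorem gammaBar_one_ratio_bound (m : ℕ) (hm : 2 ≤ m) :
    gammaBar 1 m ≤ (64 / (27 * Real.exp 1)) * gammaBar 1 (m - 1) ∧
    gammaBar 1 m < gammaBar 1 (m - 1) := by
  obtain ⟨k, rfl⟩ : ∃ k, m = k + 1 := ⟨m - 1, by omega⟩
  have hk : 1 ≤ k := by omega
  have hk0 : (0 : ℝ) < k := by exact_mod_cast hk
  rw [Nat.add_sub_cancel, gammaBar_closed _ (by omega), gammaBar_closed k hk]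
  have he := Real.exp_pos 1
  have hA : (k : ℝ) ^ (k + 1) * Real.exp 1 ≤ ((k : ℝ) + 1) ^ (k + 1) := by
    have h := Real.add_one_le_exp (-(1 / ((k : ℝ) + 1)))
    have h' : (k : ℝ) / (k + 1) ≤ Real.exp (-(1 / ((k : ℝ) + 1))) := by
      refine le_trans (le_of_eq ?_) h
      field_simp
      ring
    have h2 := pow_le_pow_left₀ (by positivity) h' (k + 1)
    rw [← Real.exp_nat_mul, show ((k + 1 : ℕ) : ℝ) * (-(1 / ((k : ℝ) + 1))) = -1 by
      push_cast; field_simp, Real.exp_neg, div_pow, div_le_iff₀ (by positivity)] at h2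
    calc _ ≤ _ := mul_le_mul_of_nonneg_right h2 he.le
      _ = _ := by field_simp
  have hB : 54 * ((k : ℝ) + 2) ^ 2 * k ≤ 64 * ((k : ℝ) + 1) ^ 3 := by
    nlinarith [mul_nonneg (by positivity : (0 : ℝ) ≤ 5 * k + 8) (sq_nonneg ((k : ℝ) - 2)), sq_nonneg ((k : ℝ) - 2)]
  have hAB := mul_le_mul hA hB (by positivity) (by positivity)
  have hfac : (((k + 1 + 1).factorial : ℕ) : ℝ) = (k + 2) * ((k + 1).factorial : ℝ) := by
    rw [Nat.factorial_succ]; push_cast; ring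
  have hF : (0 : ℝ) < ((k + 1).factorial : ℝ) := by positivity
  have hmain : (2 : ℝ) ^ (k + 1) * (((k + 1 : ℕ) : ℝ) + 1) * ((k + 1 + 1).factorial : ℝ) /
      (2 * ((k + 1 : ℕ) : ℝ) ^ (k + 1 + 2)) ≤ (64 / (27 * Real.exp 1)) *
      (2 ^ k * (k + 1) * ((k + 1).factorial : ℝ) / (2 * (k : ℝ) ^ (k + 2))) := by
    rw [hfac]
    push_cast
    rw [div_mul_div_comm, div_le_div_iff₀ (by positivity) (by positivity)]
    have := mul_le_mul_of_nonneg_left hAB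
      (by positivity : (0 : ℝ) ≤ 2 * 2 ^ k * ((k + 1).factorial : ℝ))
    refine le_trans (le_of_eq ?_) (this.trans (le_of_eq ?_)) <;> ring
  refine ⟨hmain, hmain.trans_lt ?_⟩
  have hc : 64 / (27 * Real.exp 1) < 1 := by
    rw [div_lt_one (by positivity)]
    linarith [Real.exp_one_gt_d9]
  exact mul_lt_of_lt_one_left (by positivity) hc
end

section
/- (Wendel's inequality) For every real number x > 0, Γ(x + 1/2) ≤ √x · Γ(x). -/
theorem wendel_inequality (x : ℝ) (hx : 0 < x) :
    Real.Gamma (x + 1 / 2) ≤ Real.sqrt x * Real.Gamma x := by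
  have h := Real.Gamma_mul_add_mul_le_rpow_Gamma_mul_rpow_Gamma (s := x) (t := x + 1)
    (a := 1 / 2) (b := 1 / 2) hx (by linarith) (by norm_num) (by norm_num) (by norm_num)
  have hG : 0 < Real.Gamma x := Real.Gamma_pos_of_pos hx
  rw [Real.Gamma_add_one hx.ne', ← Real.sqrt_eq_rpow, ← Real.sqrt_eq_rpow,
    Real.sqrt_mul hx.le] at h
  have e : (1 / 2 : ℝ) * x + 1 / 2 * (x + 1) = x + 1 / 2 := by ring
  rw [e] at h
  have hs := Real.mul_self_sqrt hG.le
  calc Real.Gamma (x + 1 / 2)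
      ≤ _ := h
    _ = Real.sqrt x * (Real.sqrt (Real.Gamma x) * Real.sqrt (Real.Gamma x)) := by ring
    _ = _ := by rw [hs]
end

section
/- For all integers n ≥ 2 and m ≥ 2, (γ̄_{n,m} / γ̄_{n,m-1})^2 ≤ 20/(3e^2) where e is Euler's number; in particular γ̄_{n,m} < γ̄_{n,m-1}. -/
theorem Gamma_half_sq (x : ℝ) (hx : 0 < x) :
    Real.Gamma (x + 1 / 2) ^ 2 ≤ x * Real.Gamma x ^ 2 := by
  have h := Real.Gamma_mul_add_mul_le_rpow_Gamma_mul_rpow_Gamma (s := x) (t := x + 1)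
    (a := 1 / 2) (b := 1 / 2) hx (by linarith) (by norm_num) (by norm_num) (by norm_num)
  have e : (1 / 2 : ℝ) * x + 1 / 2 * (x + 1) = x + 1 / 2 := by ring
  have hG : 0 < Real.Gamma x := Real.Gamma_pos_of_pos hx
  have h0 : 0 < Real.Gamma (x + 1 / 2) := Real.Gamma_pos_of_pos (by linarith)
  rw [e, Real.Gamma_add_one hx.ne', ← Real.sqrt_eq_rpow, ← Real.sqrt_eq_rpow,
    ← Real.sqrt_mul hG.le] at h
  have h2 := pow_le_pow_left₀ h0.le h 2
  rw [Real.sq_sqrt (by positivity)] at h2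
  linarith

theorem gammaBar_pos_aux (n k : ℕ) (hn : 2 ≤ n) (hk : 1 ≤ k) : 0 < gammaBar n k := by
  have hn' : (2 : ℝ) ≤ n := by exact_mod_cast hn
  have hk' : (1 : ℝ) ≤ k := by exact_mod_cast hk
  have h1 : (0 : ℝ) < (n : ℝ) + k - 1 := by linarith
  have h2 := Real.Gamma_pos_of_pos (s := (k : ℝ) / 2) (by positivity)
  have h3 := Real.Gamma_pos_of_pos (s := 2 * (n : ℝ) + k) (by positivity)
  have h4 := Real.Gamma_pos_of_pos (s := (n : ℝ) + k / 2) (by positivity)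
  unfold gammaBar
  positivity

theorem ratio_formula (n k : ℕ) (hn : 2 ≤ n) (hk : 1 ≤ k) :
    gammaBar n (k + 1) / gammaBar n k =
      4 * (((n : ℝ) + k + 1) / ((n : ℝ) + k) ^ 2) *
      ((((n : ℝ) + k - 1) / ((n : ℝ) + k)) ^ (n + k)) *
      (Real.Gamma ((k : ℝ) / 2 + 1 / 2) * Real.Gamma ((n : ℝ) + k / 2 + 1) /
        (Real.Gamma ((k : ℝ) / 2) * Real.Gamma ((n : ℝ) + k / 2 + 1 / 2))) := by
  have hn' : (2 : ℝ) ≤ n := by exact_mod_cast hn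
  have hk' : (1 : ℝ) ≤ k := by exact_mod_cast hk
  have h1 : (0 : ℝ) < (n : ℝ) + k - 1 := by linarith
  have h2 := Real.Gamma_pos_of_pos (s := (k : ℝ) / 2) (by positivity)
  have h3 := Real.Gamma_pos_of_pos (s := 2 * (n : ℝ) + k) (by positivity)
  have h4 := Real.Gamma_pos_of_pos (s := (n : ℝ) + k / 2) (by positivity)
  have h5 := Real.Gamma_pos_of_pos (s := (n : ℝ) + k / 2 + 1 / 2) (by positivity)
  have hy : (n : ℝ) + k / 2 ≠ 0 := by positivity
  have hp : (0 : ℝ) < n + k := by positivity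
  unfold gammaBar
  push_cast
  have e1 : ((k : ℝ) + 1) / 2 = k / 2 + 1 / 2 := by ring
  have e2 : 2 * (n : ℝ) + (k + 1) = (2 * n + k) + 1 := by ring
  have e3 : (n : ℝ) + (k / 2 + 1 / 2) = n + k / 2 + 1 / 2 := by ring
  have e4 : (n : ℝ) + (k + 1) - 1 = n + k := by ring
  have e5 : (2 : ℝ) ^ ((n : ℤ) - k + 1) = 2 * 2 ^ ((n : ℤ) - (k + 1) + 1) := by
    rw [← zpow_one_add₀ (by norm_num)]; congr 1; ring
  have hz : (0 : ℝ) < 2 ^ ((n : ℤ) - (k + 1) + 1) := by positivity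
  rw [e1, e2, e3, e4, e5, Real.Gamma_add_one hy,
    Real.Gamma_add_one (s := 2 * (n : ℝ) + k) (by positivity), ← add_assoc n k 1, pow_succ, div_pow]
  generalize (2 : ℝ) ^ ((n : ℤ) - (k + 1) + 1) = z at *
  generalize Real.Gamma ((k : ℝ) / 2) = B at *
  generalize Real.Gamma (2 * (n : ℝ) + k) = E at *
  generalize Real.Gamma ((n : ℝ) + k / 2) = C at *
  generalize Real.Gamma ((n : ℝ) + k / 2 + 1 / 2) = D at *
  generalize Real.Gamma ((k : ℝ) / 2 + 1 / 2) = A at *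
  have hq : 0 < ((n : ℝ) + k - 1) ^ (n + k) := by positivity
  have hr : 0 < ((n : ℝ) + k) ^ (n + k) := by positivity
  generalize ((n : ℝ) + k - 1) ^ (n + k) = q at *
  generalize ((n : ℝ) + k) ^ (n + k) = r at *
  field_simp
  ring

theorem ratio_sq_bound (n k : ℕ) (hn : 2 ≤ n) (hk : 1 ≤ k) :
    (gammaBar n (k + 1) / gammaBar n k) ^ 2 ≤ 20 / (3 * Real.exp 1 ^ 2) := by
  have hn' : (2 : ℝ) ≤ n := by exact_mod_cast hn
  have hk' : (1 : ℝ) ≤ k := by exact_mod_cast hk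
  rw [ratio_formula n k hn hk]
  have h2 := Real.Gamma_pos_of_pos (s := (k : ℝ) / 2) (by positivity)
  have h5 := Real.Gamma_pos_of_pos (s := (n : ℝ) + k / 2 + 1 / 2) (by positivity)
  have g1 := Gamma_half_sq ((k : ℝ) / 2) (by positivity)
  have g2 := Gamma_half_sq ((n : ℝ) + k / 2 + 1 / 2) (by positivity)
  have e0 : (n : ℝ) + k / 2 + 1 / 2 + 1 / 2 = n + k / 2 + 1 := by ring
  rw [e0] at g2
  have hp : (0 : ℝ) < n + k := by positivity
  have hrho : ((((n : ℝ) + k - 1) / ((n : ℝ) + k)) ^ (n + k)) ≤ (Real.exp 1)⁻¹ := by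
    have a1 : ((n : ℝ) + k - 1) / ((n : ℝ) + k) ≤ Real.exp (-(1 / ((n : ℝ) + k))) := by
      have := Real.add_one_le_exp (-(1 / ((n : ℝ) + k)))
      have e : ((n : ℝ) + k - 1) / ((n : ℝ) + k) = -(1 / ((n : ℝ) + k)) + 1 := by
        field_simp; ring
      rw [e]; exact this
    have a2 := pow_le_pow_left₀ (div_nonneg (by linarith) hp.le) a1 (n + k)
    rw [← Real.exp_nat_mul] at a2
    have e : ((n + k : ℕ) : ℝ) * -(1 / ((n : ℝ) + k)) = -1 := by
      push_cast; field_simp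
    rwa [e, Real.exp_neg] at a2
  have hrho0 : 0 ≤ ((((n : ℝ) + k - 1) / ((n : ℝ) + k)) ^ (n + k)) :=
    pow_nonneg (div_nonneg (by linarith) hp.le) _
  have hT : (Real.Gamma ((k : ℝ) / 2 + 1 / 2) * Real.Gamma ((n : ℝ) + k / 2 + 1) /
        (Real.Gamma ((k : ℝ) / 2) * Real.Gamma ((n : ℝ) + k / 2 + 1 / 2))) ^ 2
      ≤ (k : ℝ) / 2 * (n + k / 2 + 1 / 2) := by
    rw [div_pow, div_le_iff₀ (by positivity), mul_pow, mul_pow]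
    calc _ ≤ ((k : ℝ) / 2 * Real.Gamma ((k : ℝ) / 2) ^ 2) *
          ((n + k / 2 + 1 / 2) * Real.Gamma ((n : ℝ) + k / 2 + 1 / 2) ^ 2) :=
          mul_le_mul g1 g2 (by positivity) (by positivity)
      _ = _ := by ring
  have hr2 := pow_le_pow_left₀ hrho0 hrho 2
  have hmain : (4 * (((n : ℝ) + k + 1) / ((n : ℝ) + k) ^ 2)) ^ 2 *
      ((k : ℝ) / 2 * (n + k / 2 + 1 / 2)) ≤ 20 / 3 := by
    rw [mul_pow, div_pow, mul_div_assoc', div_mul_eq_mul_div, div_le_iff₀ (by positivity)]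
    obtain ⟨a, ha⟩ : ∃ a : ℝ, (n : ℝ) = 2 + a := ⟨n - 2, by ring⟩
    obtain ⟨b, hb⟩ : ∃ b : ℝ, (k : ℝ) = 1 + b := ⟨k - 1, by ring⟩
    have ha0 : 0 ≤ a := by linarith
    have hb0 : 0 ≤ b := by linarith
    have hkn : (k : ℝ) / 2 * (n + k / 2 + 1 / 2) ≤
        ((((n : ℝ) + k + 1) ^ 2 - (n + k + 1) - 6)) / 4 := by
      rw [ha, hb]; nlinarith
    obtain ⟨p, hpp⟩ : ∃ p : ℝ, (n : ℝ) + k = 3 + p := ⟨n + k - 3, by ring⟩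
    have hp0 : 0 ≤ p := by linarith
    rw [hpp] at hkn ⊢
    refine (mul_le_mul_of_nonneg_left hkn (by positivity)).trans ?_
    nlinarith [mul_nonneg hp0 (sq_nonneg (p - 2)), sq_nonneg (p * (p - 2)), sq_nonneg (p - 2), sq_nonneg (p^2 - 2), mul_nonneg hp0 (sq_nonneg (p - 3)), pow_nonneg hp0 3]
  rw [mul_pow, mul_pow _ (_ ^ (n + k))]
  calc _ ≤ (4 * (((n : ℝ) + k + 1) / ((n : ℝ) + k) ^ 2)) ^ 2 * (Real.exp 1)⁻¹ ^ 2 *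
      ((k : ℝ) / 2 * (n + k / 2 + 1 / 2)) := by
        apply mul_le_mul _ hT (by positivity) (by positivity)
        exact mul_le_mul_of_nonneg_left hr2 (by positivity)
    _ = ((4 * (((n : ℝ) + k + 1) / ((n : ℝ) + k) ^ 2)) ^ 2 *
      ((k : ℝ) / 2 * (n + k / 2 + 1 / 2))) * (Real.exp 1)⁻¹ ^ 2 := by ring
    _ ≤ 20 / 3 * (Real.exp 1)⁻¹ ^ 2 := mul_le_mul_of_nonneg_right hmain (by positivity)
    _ = _ := by
      have := Real.exp_pos 1
      field_simp

theorem gammaBar_ratio_sq_bound (n m : ℕ) (hn : 2 ≤ n) (hm : 2 ≤ m) :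
    (gammaBar n m / gammaBar n (m - 1)) ^ 2 ≤ 20 / (3 * Real.exp 1 ^ 2) ∧
    gammaBar n m < gammaBar n (m - 1) := by
  obtain ⟨k, rfl⟩ : ∃ k, m = k + 1 := ⟨m - 1, by omega⟩
  have hk : 1 ≤ k := by omega
  rw [Nat.add_sub_cancel]
  have h := ratio_sq_bound n k hn hk
  refine ⟨h, ?_⟩
  have h1 := gammaBar_pos_aux n k hn hk
  have he := Real.exp_one_gt_d9
  have h3 : 20 / (3 * Real.exp 1 ^ 2) < 1 := by
    rw [div_lt_one (by positivity)]
    nlinarith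
  have h4 : gammaBar n (k + 1) / gammaBar n k < 1 := by
    by_contra hc
    push Not at hc
    nlinarith
  rwa [div_lt_one h1] at h4
end

section
/- For all integers n ≥ 1 and m ≥ 2, γ̄_{n,m} < γ̄_{n,m-1}; that is, for each fixed n ≥ 1 the sequence m ↦ γ̄_{n,m} is strictly decreasing. -/
lemma gb_half (x : ℝ) (hx : 0 < x) :
    Real.Gamma (x + 1 / 2) ≤ √x * Real.Gamma x := by
  have h := Real.Gamma_mul_add_mul_le_rpow_Gamma_mul_rpow_Gamma (s := x) (t := x + 1)
    (a := 1 / 2) (b := 1 / 2) hx (by linarith) (by norm_num) (by norm_num) (by norm_num)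
  rw [show (1 / 2 : ℝ) * x + 1 / 2 * (x + 1) = x + 1 / 2 by ring,
    Real.Gamma_add_one hx.ne', ← Real.sqrt_eq_rpow, ← Real.sqrt_eq_rpow,
    Real.sqrt_mul hx.le] at h
  have hG := Real.Gamma_pos_of_pos hx
  have := Real.mul_self_sqrt hG.le
  calc _ ≤ _ := h
    _ = √x * (√(Real.Gamma x) * √(Real.Gamma x)) := by ring
    _ = _ := by rw [this]

lemma gb_num (N : ℕ) (hN : 2 ≤ N) :
    ((N : ℝ) + 1) * (2 * N + 1) * ((N : ℝ) - 1) ^ N < (N : ℝ) ^ (N + 2) := by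
  rcases Nat.lt_or_ge N 5 with h | h
  · interval_cases N <;> norm_num
  · have hN5 : (5 : ℝ) ≤ N := by exact_mod_cast h
    have hpos : (0 : ℝ) < N := by linarith
    have h1 : (1 - 1 / (N : ℝ)) ^ N ≤ Real.exp (-1) := by
      have := Real.one_sub_le_exp_neg (1 / (N : ℝ))
      have h0 : 0 ≤ 1 - 1 / (N : ℝ) := by
        rw [sub_nonneg, div_le_one hpos]; linarith
      calc _ ≤ (Real.exp (-(1 / (N : ℝ)))) ^ N := pow_le_pow_left₀ h0 this N
        _ = _ := by rw [← Real.exp_nat_mul]; congr 1; field_simp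
    have h2 : Real.exp (-1) < 0.37 := lt_trans Real.exp_neg_one_lt_d9 (by norm_num)
    have h3 : ((N : ℝ) - 1) ^ N = (N : ℝ) ^ N * (1 - 1 / (N : ℝ)) ^ N := by
      rw [← mul_pow]; congr 1; field_simp
    have hp : 0 < (N : ℝ) ^ N := by positivity
    rw [h3, pow_add]
    have h4 : ((N : ℝ) + 1) * (2 * N + 1) * (1 - 1 / (N : ℝ)) ^ N < (N : ℝ) ^ 2 := by
      calc _ ≤ ((N : ℝ) + 1) * (2 * N + 1) * 0.37 := by
            gcongr; linarith
        _ < _ := by nlinarith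
    calc _ = (N : ℝ) ^ N * (((N : ℝ) + 1) * (2 * N + 1) * (1 - 1 / (N : ℝ)) ^ N) := by ring
      _ < _ := by gcongr

lemma gb_step (n m : ℕ) (hn : 1 ≤ n) (hm : 1 ≤ m) :
    gammaBar n (m + 1) < gammaBar n m := by
  have hn' : (1 : ℝ) ≤ n := by exact_mod_cast hn
  have hm' : (1 : ℝ) ≤ m := by exact_mod_cast hm
  have hnum := gb_num (n + m) (by omega)
  unfold gammaBar
  push_cast at hnum ⊢
  have hx : (0 : ℝ) < m / 2 := by linarith
  have hy : (0 : ℝ) < n + m / 2 := by linarith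
  have hB := gb_half _ hx
  have hD := gb_half ((n : ℝ) + m / 2 + 1 / 2) (by linarith)
  rw [show (n : ℝ) + m / 2 + 1 / 2 + 1 / 2 = (n + m / 2) + 1 by ring,
    Real.Gamma_add_one hy.ne'] at hD
  rw [show ((m : ℝ) + 1) / 2 = m / 2 + 1 / 2 by ring,
    show (n : ℝ) + (m / 2 + 1 / 2) = n + m / 2 + 1 / 2 by ring,
    show 2 * (n : ℝ) + (m + 1) = (2 * n + m) + 1 by ring,
    Real.Gamma_add_one (show 2 * (n : ℝ) + m ≠ 0 by linarith),
    show (n : ℤ) - m + 1 = ((n : ℤ) - (m + 1) + 1) + 1 by ring,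
    zpow_add_one₀ (two_ne_zero) ((n : ℤ) - (m + 1) + 1),
    show (n : ℝ) + (m + 1) - 1 = n + m by ring, ← add_assoc, ← add_assoc]
  have hA := Real.Gamma_pos_of_pos hx
  have hBp := Real.Gamma_pos_of_pos (show (0 : ℝ) < m / 2 + 1 / 2 by linarith)
  have hC := Real.Gamma_pos_of_pos hy
  have hDp := Real.Gamma_pos_of_pos (show (0 : ℝ) < n + m / 2 + 1 / 2 by linarith)
  have hG := Real.Gamma_pos_of_pos (show (0 : ℝ) < 2 * n + m by linarith)
  have hP : (0 : ℝ) < 2 ^ ((n : ℤ) - (m + 1) + 1) := by positivity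
  have hs : √((m : ℝ) / 2) * √((n : ℝ) + m / 2 + 1 / 2) ≤ (2 * (n + m) + 1) / 4 := by
    have a1 := Real.sq_sqrt hx.le
    have a2 := Real.sq_sqrt (show (0 : ℝ) ≤ n + m / 2 + 1 / 2 by linarith)
    nlinarith [sq_nonneg (√((m : ℝ) / 2) - √((n : ℝ) + m / 2 + 1 / 2))]
  have hQ : (0 : ℝ) < ((n : ℝ) + m - 1) ^ (n + m) := pow_pos (by linarith) _
  generalize (2 : ℝ) ^ ((n : ℤ) - (m + 1) + 1) = P at *
  generalize Real.Gamma ((m : ℝ) / 2) = A at *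
  generalize Real.Gamma ((m : ℝ) / 2 + 1 / 2) = B at *
  generalize Real.Gamma ((n : ℝ) + m / 2) = C at *
  generalize Real.Gamma ((n : ℝ) + m / 2 + 1 / 2) = D at *
  generalize Real.Gamma (2 * (n : ℝ) + m) = G at *
  generalize ((n : ℝ) + m - 1) ^ (n + m) = Q at *
  have hkey : B * (((n : ℝ) + m / 2) * C) ≤ (2 * (n + m) + 1) / 4 * (A * D) := by
    calc _ ≤ (√((m : ℝ) / 2) * A) * (√((n : ℝ) + m / 2 + 1 / 2) * D) := by gcongr
      _ = (√((m : ℝ) / 2) * √((n : ℝ) + m / 2 + 1 / 2)) * (A * D) := by ring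
      _ ≤ _ := by gcongr
  have hfin : 4 * (B * (((n : ℝ) + m / 2) * C)) * ((n + m + 1) * Q)
      < (n + m : ℝ) ^ (n + m + 2) * (A * D) := by
    calc _ ≤ 4 * ((2 * (n + m) + 1) / 4 * (A * D)) * (((n : ℝ) + m + 1) * Q) := by gcongr
      _ = ((n + m + 1) * (2 * (n + m) + 1) * Q) * (A * D) := by ring
      _ < _ := by gcongr
  have hN : (0 : ℝ) < n + m := by linarith
  have e1 : 1 / P * (((n : ℝ) + m + 1) / (n + m) ^ (n + m + 1)) *
      (B * ((2 * n + m) * G) / D) =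
      (4 * (B * (((n : ℝ) + m / 2) * C)) * ((n + m + 1) * Q)) *
        (G / (2 * P * (n + m) ^ (n + m + 1) * D * C * Q)) := by
    field_simp
    ring
  have e2 : 1 / (P * 2) * (((n : ℝ) + m) / Q) * (A * G / C) =
      ((n + m : ℝ) ^ (n + m + 2) * (A * D)) *
        (G / (2 * P * (n + m) ^ (n + m + 1) * D * C * Q)) := by
    rw [pow_succ _ (n + m + 1)]
    field_simp
  rw [e1, e2]
  gcongr

theorem gammaBar_strict_decreasing_in_m (n m : ℕ) (hn : 1 ≤ n) (hm : 2 ≤ m) :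
    gammaBar n m < gammaBar n (m - 1) := by
  obtain ⟨k, rfl⟩ : ∃ k, m = k + 1 := ⟨m - 1, by omega⟩
  exact gb_step n k hn (by omega)
end

section
/- Let n ≥ 1 and m ≥ 1 be integers such that there exist m real 2n × 2n matrices U^{(1)}, …, U^{(m)} that are skew-symmetric (Uᵀ = -U), orthogonal (Uᵀ U = I), and pairwise anticommuting (U^{(i)} U^{(j)} = -U^{(j)} U^{(i)} for i ≠ j), i.e. (n, m) is the dimension pair of an H-type group. If (n, m) is not one of the four pairs (1,1), (2,1), (3,1), (2,2), then γ̃_{n,m} < 1. -/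
/-- `∏_{i<n} (m + 2 i)`. -/
noncomputable def PP (n m : ℕ) : ℝ := ∏ i ∈ Finset.range n, ((m : ℝ) + 2 * i)

/-- The bound from the first term of the series. -/
noncomputable def BB (n m : ℕ) : ℝ :=
  2 ^ m * ((n : ℝ) + m) * Real.Gamma (2 * (n : ℝ) + m) /
    (2 * ((n : ℝ) + m - 1) ^ (n + m) * PP n m)

lemma PP_pos (n m : ℕ) (hm : 1 ≤ m) : 0 < PP n m := by
  unfold PP
  have : (1 : ℝ) ≤ m := by exact_mod_cast hm
  exact Finset.prod_pos fun i _ => by positivity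

lemma PP_succ (n m : ℕ) : PP (n + 1) m = PP n m * (m + 2 * n) := by
  unfold PP
  rw [Finset.prod_range_succ]

lemma PP_sq (n m : ℕ) : PP n m ^ 2 * (m + 2 * n) ≤ m * PP n (m + 1) ^ 2 := by
  induction n with
  | zero => simp [PP]
  | succ n ih =>
    rw [PP_succ, PP_succ]
    push_cast
    have h1 : (0 : ℝ) ≤ (m + 2 * n) * (m + 2 * (n + 1)) := by positivity
    have h2 := mul_le_mul_of_nonneg_right ih h1
    have h3 : (0 : ℝ) ≤ m * PP n (m + 1) ^ 2 := by positivity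
    have h4 : ((m : ℝ) + 2 * n) * (m + 2 * (n + 1)) ≤ (m + 1 + 2 * n) ^ 2 := by nlinarith
    have h5 := mul_le_mul_of_nonneg_left h4 h3
    calc _ = PP n m ^ 2 * (m + 2 * n) * ((m + 2 * n) * (m + 2 * (n + 1))) := by ring
      _ ≤ _ := h2
      _ ≤ _ := h5
      _ = _ := by ring

lemma PP_le (n m : ℕ) (hm : 1 ≤ m) :
    (2 * (n : ℝ) + m) * PP n m ≤ (n + m) * PP n (m + 1) := by
  have p := PP_pos n m hm
  have p' := PP_pos n (m + 1) (by omega)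
  refine (pow_le_pow_iff_left₀ (by positivity) (by positivity) two_ne_zero).1 ?_
  have h := mul_le_mul_of_nonneg_left (PP_sq n m) (show (0 : ℝ) ≤ 2 * n + m by positivity)
  have h2 : (2 * (n : ℝ) + m) * m ≤ (n + m) ^ 2 := by nlinarith [sq_nonneg (n : ℝ)]
  have h3 := mul_le_mul_of_nonneg_right h2 (sq_nonneg (PP n (m + 1)))
  calc _ = (2 * (n : ℝ) + m) * (PP n m ^ 2 * (m + 2 * n)) := by ring
    _ ≤ _ := h
    _ = _ := by ring
    _ ≤ _ := h3
    _ = _ := by ring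

lemma pow_bound (N : ℕ) (hN : 3 ≤ N) :
    2 * ((N : ℝ) + 1) * ((N : ℝ) - 1) ^ N ≤ (N : ℝ) ^ (N + 1) := by
  have h3 : (3 : ℝ) ≤ N := by exact_mod_cast hN
  have h := Real.one_sub_div_pow_le_exp_neg (n := N) (t := 1) (by linarith)
  have he := Real.exp_neg_one_lt_d9
  have h4 : (1 - 1 / (N : ℝ)) ^ N ≤ 3 / 8 := by linarith
  have h5 : ((N : ℝ) - 1) ^ N = (1 - 1 / (N : ℝ)) ^ N * (N : ℝ) ^ N := by
    rw [← mul_pow]; congr 1; field_simp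
  have hp : (0 : ℝ) < (N : ℝ) ^ N := by positivity
  rw [h5, pow_succ]
  have h6 : 2 * ((N : ℝ) + 1) * (1 - 1 / (N : ℝ)) ^ N ≤ N := by
    nlinarith
  nlinarith

lemma BB_step_m (n m : ℕ) (hn : 2 ≤ n) (hm : 1 ≤ m) : BB n (m + 1) ≤ BB n m := by
  have p := PP_pos n m hm
  have p' := PP_pos n (m + 1) (by omega)
  have hn' : (2 : ℝ) ≤ n := by exact_mod_cast hn
  have hm' : (1 : ℝ) ≤ m := by exact_mod_cast hm
  have h1 := PP_le n m hm
  have h2 := pow_bound (n + m) (by omega)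
  push_cast at h2
  have hG : Real.Gamma (2 * (n : ℝ) + (m + 1 : ℕ)) = (2 * n + m) * Real.Gamma (2 * (n : ℝ) + m) := by
    push_cast
    rw [← add_assoc, Real.Gamma_add_one (by positivity)]
  have hG0 : 0 < Real.Gamma (2 * (n : ℝ) + m) := Real.Gamma_pos_of_pos (by positivity)
  unfold BB
  rw [hG]
  have q : (0 : ℝ) < (n : ℝ) + m - 1 := by linarith
  have e : (n : ℝ) + (m + 1 : ℕ) - 1 = n + m := by push_cast; ring
  rw [e]
  rw [div_le_div_iff₀ (by positivity) (by positivity)]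
  push_cast
  rw [← add_assoc n m 1]
  set G := Real.Gamma (2 * (n : ℝ) + m)
  set A := ((n : ℝ) + m - 1) ^ (n + m)
  have hA : 0 < A := by positivity
  have k1 : 2 * ((n : ℝ) + m + 1) * A * ((2 * (n : ℝ) + m) * PP n m) ≤
      2 * ((n : ℝ) + m + 1) * A * ((n + m) * PP n (m + 1)) := by gcongr
  have k2 : 2 * ((n : ℝ) + m + 1) * A * ((n + m) * PP n (m + 1)) ≤
     ((n : ℝ) + m) ^ (n + m + 1) * ((n + m) * PP n (m + 1)) := by gcongr
  have k3 := mul_le_mul_of_nonneg_left (k1.trans k2) (show 0 ≤ 2 ^ m * G * 2 by positivity)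
  calc _ = 2 ^ m * G * 2 * (2 * ((n : ℝ) + m + 1) * A * ((2 * (n : ℝ) + m) * PP n m)) := by ring
    _ ≤ _ := k3
    _ = _ := by ring

lemma BB_step_n (n : ℕ) (hn : 1 ≤ n) : BB (n + 1) 1 ≤ BB n 1 := by
  have p := PP_pos n 1 le_rfl
  have hn' : (1 : ℝ) ≤ n := by exact_mod_cast hn
  have hG : Real.Gamma (2 * ((n + 1 : ℕ) : ℝ) + (1 : ℕ)) =
      (2 * n + 2) * ((2 * n + 1) * Real.Gamma (2 * (n : ℝ) + (1 : ℕ))) := by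
    push_cast
    rw [show 2 * ((n : ℝ) + 1) + 1 = (2 * n + 2) + 1 by ring, Real.Gamma_add_one (by positivity),
      show 2 * (n : ℝ) + 2 = (2 * n + 1) + 1 by ring, Real.Gamma_add_one (by positivity)]
  have hG0 : 0 < Real.Gamma (2 * (n : ℝ) + (1 : ℕ)) := Real.Gamma_pos_of_pos (by positivity)
  unfold BB
  rw [hG, PP_succ]
  set G := Real.Gamma (2 * (n : ℝ) + (1 : ℕ))
  push_cast
  rw [add_sub_cancel_right, add_sub_cancel_right]
  rw [div_le_div_iff₀ (by positivity) (by positivity)]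
  have hb : 2 * (n : ℝ) ^ n ≤ (n + 1) ^ n := by
    have h := one_add_mul_le_pow (a := 1 / (n : ℝ)) (by have : 0 ≤ 1 / (n : ℝ) := by positivity
                                                        linarith) n
    have h5 : ((n : ℝ) + 1) ^ n = (1 + 1 / (n : ℝ)) ^ n * (n : ℝ) ^ n := by
      rw [← mul_pow]; congr 1; field_simp
    rw [h5]
    have : 1 + (n : ℝ) * (1 / n) = 2 := by field_simp; norm_num
    rw [this] at h
    gcongr
  have k : 2 * (n : ℝ) ^ n * (n * (n + 2)) ≤ (n + 1) ^ n * (n + 1) ^ 2 := by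
    apply mul_le_mul hb (by nlinarith) (by positivity) (by positivity)
  have k3 := mul_le_mul_of_nonneg_left k
    (show 0 ≤ 4 * G * PP n 1 * (2 * n + 1) * (n + 1) by positivity)
  calc _ = 4 * G * PP n 1 * (2 * n + 1) * (n + 1) * (2 * (n : ℝ) ^ n * (n * (n + 2))) := by ring
    _ ≤ _ := k3
    _ = _ := by ring

lemma BB_mono_m (n m₀ m : ℕ) (hn : 2 ≤ n) (hm : 1 ≤ m₀) (h : m₀ ≤ m) : BB n m ≤ BB n m₀ := by
  induction m, h using Nat.le_induction with
  | base => exact le_rfl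
  | succ k hk ih => exact (BB_step_m n k hn (by omega)).trans ih

lemma BB_mono_n (n₀ n : ℕ) (hn : 1 ≤ n₀) (h : n₀ ≤ n) : BB n 1 ≤ BB n₀ 1 := by
  induction n, h using Nat.le_induction with
  | base => exact le_rfl
  | succ k hk ih => exact (BB_step_n k (by omega)).trans ih

lemma summ (n m : ℕ) (hn : 1 ≤ n) (hm : 1 ≤ m) :
    Summable fun k : ℕ => ((k + n - 1).choose k : ℝ) / (2 * (k : ℝ) + n) ^ (n + m) := by
  have hs : Summable fun k : ℕ => 1 / ((k + 1 : ℕ) : ℝ) ^ 2 :=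
    (summable_nat_add_iff 1).2 (Real.summable_one_div_nat_pow.2 (by norm_num))
  refine Summable.of_nonneg_of_le (fun k => by positivity) (fun k => ?_) hs
  have hn' : (1 : ℝ) ≤ n := by exact_mod_cast hn
  have hk : (0 : ℝ) ≤ k := by positivity
  have h1 : ((k + n - 1).choose k : ℝ) ≤ (2 * (k : ℝ) + n) ^ (n - 1) := by
    have e : (k + n - 1).choose k = (k + n - 1).choose (n - 1) := by
      rw [← Nat.choose_symm (by omega)]; congr 1; omega
    have : (k + n - 1).choose k ≤ (2 * k + n) ^ (n - 1) := by
      rw [e]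
      exact (Nat.choose_le_pow _ _).trans (Nat.pow_le_pow_left (by omega) _)
    exact_mod_cast this
  have e : n + m = (n - 1) + (m + 1) := by omega
  rw [e, pow_add, div_le_div_iff₀ (by positivity) (by positivity)]
  have h2 : ((k + 1 : ℕ) : ℝ) ^ 2 ≤ (2 * (k : ℝ) + n) ^ (m + 1) := by
    calc ((k + 1 : ℕ) : ℝ) ^ 2 ≤ (2 * (k : ℝ) + n) ^ 2 := by
          push_cast; gcongr; linarith
      _ ≤ _ := pow_le_pow_right₀ (by linarith) (by omega)
  rw [one_mul]
  exact mul_le_mul h1 h2 (by positivity) (by positivity)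

lemma Gamma_PP (n m : ℕ) (hm : 1 ≤ m) :
    Real.Gamma ((n : ℝ) + m / 2) * 2 ^ n = Real.Gamma ((m : ℝ) / 2) * PP n m := by
  have hm' : (1 : ℝ) ≤ m := by exact_mod_cast hm
  induction n with
  | zero => simp [PP]
  | succ n ih =>
    push_cast
    rw [show (n : ℝ) + 1 + m / 2 = (n + m / 2) + 1 by ring, Real.Gamma_add_one (by positivity),
      PP_succ, ← mul_assoc, ← ih]
    ring

lemma gt_lt (n m K : ℕ) (hn : 1 ≤ n) (hm : 1 ≤ m)
    (h : BB n m < (n : ℝ) ^ (n + m) *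
      ∑ k ∈ Finset.range K, ((k + n - 1).choose k : ℝ) / (2 * (k : ℝ) + n) ^ (n + m)) :
    gammaTilde n m < 1 := by
  have hn' : (1 : ℝ) ≤ n := by exact_mod_cast hn
  have hm' : (1 : ℝ) ≤ m := by exact_mod_cast hm
  have hle := (summ n m hn hm).sum_le_tsum (Finset.range K) (fun k _ => by positivity)
  have hB : BB n m < (n : ℝ) ^ (n + m) * seriesC n m :=
    h.trans_le (mul_le_mul_of_nonneg_left hle (by positivity))
  have p := PP_pos n m hm
  have q : (0 : ℝ) < (n : ℝ) + m - 1 := by linarith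
  have hG0 : 0 < Real.Gamma (2 * (n : ℝ) + m) := Real.Gamma_pos_of_pos (by positivity)
  have hG1 : 0 < Real.Gamma ((m : ℝ) / 2) := Real.Gamma_pos_of_pos (by positivity)
  have hB0 : 0 < BB n m := by unfold BB; positivity
  have hS : 0 < seriesC n m := pos_of_mul_pos_right (hB0.trans hB) (by positivity)
  have hGP := Gamma_PP n m hm
  have hGe : Real.Gamma ((n : ℝ) + m / 2) = Real.Gamma ((m : ℝ) / 2) * PP n m / 2 ^ n := by
    rw [← hGP]; field_simp
  have e : gammaTilde n m = BB n m / ((n : ℝ) ^ (n + m) * seriesC n m) := by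
    unfold gammaTilde BB
    rw [hGe, zpow_add₀ (by norm_num), zpow_sub₀ (by norm_num)]
    simp only [zpow_natCast, zpow_one]
    field_simp
  rw [e, div_lt_one (by positivity)]
  exact hB

lemma gt_lt_one (n m : ℕ) (hn : 1 ≤ n) (hm : 1 ≤ m) (h : BB n m < 1) : gammaTilde n m < 1 := by
  refine gt_lt n m 1 hn hm ?_
  have hn' : (n : ℝ) ≠ 0 := by positivity
  simpa [hn'] using h

lemma BB_eq (n m : ℕ) (hm : 1 ≤ m) : BB n m =
    2 ^ m * ((n : ℝ) + m) * ((2 * n + m - 1).factorial : ℝ) /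
    (2 * ((n : ℝ) + m - 1) ^ (n + m) * PP n m) := by
  have : 2 * (n : ℝ) + m = ((2 * n + m - 1 : ℕ) : ℝ) + 1 := by
    have : 2 * n + m = (2 * n + m - 1) + 1 := by omega
    exact_mod_cast this
  unfold BB
  rw [this, Real.Gamma_nat_eq_factorial]

open Matrix in
theorem pleijel_htype (n m : ℕ) (hn : 1 ≤ n) (hm : 1 ≤ m)
    (U : Fin m → Matrix (Fin (2 * n)) (Fin (2 * n)) ℝ)
    (hskew : ∀ i, (U i)ᵀ = -U i)
    (horth : ∀ i, (U i)ᵀ * U i = 1)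
    (hanti : ∀ i j, i ≠ j → U i * U j = -(U j * U i))
    (hexc : (n, m) ∉ ({(1, 1), (2, 1), (3, 1), (2, 2)} : Set (ℕ × ℕ))) :
    gammaTilde n m < 1 := by
  simp only [Set.mem_insert_iff, Set.mem_singleton_iff, Prod.mk.injEq, not_or] at hexc
  obtain ⟨h11, h21, h31, h22⟩ := hexc
  rcases Nat.lt_or_ge n 7 with h7 | h7
  · have hcases : n = 1 ∨ (n = 2 ∧ 3 ≤ m) ∨ (n = 3 ∧ m = 2) ∨ (n = 3 ∧ 3 ≤ m) ∨
      (n = 4 ∧ m = 1) ∨ (n = 5 ∧ m = 1) ∨ (n = 6 ∧ m = 1) ∨ (n = 4 ∧ 2 ≤ m) ∨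
      (n = 5 ∧ 2 ≤ m) ∨ (n = 6 ∧ 2 ≤ m) := by omega
    rcases hcases with rfl | ⟨rfl, h⟩ | ⟨rfl, rfl⟩ | ⟨rfl, h⟩ | ⟨rfl, rfl⟩ | ⟨rfl, rfl⟩ |
      ⟨rfl, rfl⟩ | ⟨rfl, h⟩ | ⟨rfl, h⟩ | ⟨rfl, h⟩
    · exfalso
      have hm2 : 2 ≤ m := by omega
      set A := U ⟨0, by omega⟩ with hA
      set B := U ⟨1, by omega⟩ with hB
      have sA := hskew ⟨0, by omega⟩
      have sB := hskew ⟨1, by omega⟩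
      have oA := horth ⟨0, by omega⟩
      have oB := horth ⟨1, by omega⟩
      have ab := hanti ⟨0, by omega⟩ ⟨1, by omega⟩ (by simp)
      rw [← hA] at sA oA ab
      rw [← hB] at sB oB ab
      clear_value A B
      change Matrix (Fin 2) (Fin 2) ℝ at A
      change Matrix (Fin 2) (Fin 2) ℝ at B
      have a00 := congrFun (congrFun sA (0 : Fin 2)) (0 : Fin 2)
      have a01 := congrFun (congrFun sA (0 : Fin 2)) (1 : Fin 2)
      have a11 := congrFun (congrFun sA (1 : Fin 2)) (1 : Fin 2)
      have b00 := congrFun (congrFun sB (0 : Fin 2)) (0 : Fin 2)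
      have b01 := congrFun (congrFun sB (0 : Fin 2)) (1 : Fin 2)
      have oa := congrFun (congrFun oA (0 : Fin 2)) (0 : Fin 2)
      have ob := congrFun (congrFun oB (0 : Fin 2)) (0 : Fin 2)
      have c := congrFun (congrFun ab (0 : Fin 2)) (0 : Fin 2)
      simp [Matrix.mul_apply, Fin.sum_univ_two] at a00 a01 a11 b00 b01 oa ob c
      have za : A 0 0 = 0 := by linarith
      have zb : B 0 0 = 0 := by linarith
      rw [za] at oa c
      rw [zb] at ob c
      rw [a01] at oa c
      rw [b01] at ob c
      have hc : A 0 1 * B 0 1 = 0 := by linarith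
      rcases mul_eq_zero.1 hc with h | h
      · have : A 0 1 * A 0 1 = 1 := by linarith
        rw [h] at this; norm_num at this
      · have : B 0 1 * B 0 1 = 1 := by linarith
        rw [h] at this; norm_num at this
    · refine gt_lt_one _ _ hn hm ((BB_mono_m 2 3 m (by norm_num) (by norm_num) h).trans_lt ?_)
      rw [BB_eq _ _ (by norm_num)]
      norm_num [PP, Finset.prod_range_succ, Nat.factorial]
    · refine gt_lt _ _ 2 hn hm ?_
      rw [BB_eq _ _ (by norm_num)]
      norm_num [PP, Finset.prod_range_succ, Finset.sum_range_succ, Nat.factorial, Nat.choose]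
    · refine gt_lt_one _ _ hn hm ((BB_mono_m 3 3 m (by norm_num) (by norm_num) h).trans_lt ?_)
      rw [BB_eq _ _ (by norm_num)]
      norm_num [PP, Finset.prod_range_succ, Nat.factorial]
    · refine gt_lt _ _ 5 hn hm ?_
      rw [BB_eq _ _ (by norm_num)]
      norm_num [PP, Finset.prod_range_succ, Finset.sum_range_succ, Nat.factorial, Nat.choose]
    · refine gt_lt _ _ 2 hn hm ?_
      rw [BB_eq _ _ (by norm_num)]
      norm_num [PP, Finset.prod_range_succ, Finset.sum_range_succ, Nat.factorial, Nat.choose]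
    · refine gt_lt _ _ 2 hn hm ?_
      rw [BB_eq _ _ (by norm_num)]
      norm_num [PP, Finset.prod_range_succ, Finset.sum_range_succ, Nat.factorial, Nat.choose]
    · refine gt_lt_one _ _ hn hm ((BB_mono_m 4 2 m (by norm_num) (by norm_num) h).trans_lt ?_)
      rw [BB_eq _ _ (by norm_num)]
      norm_num [PP, Finset.prod_range_succ, Nat.factorial]
    · refine gt_lt_one _ _ hn hm ((BB_mono_m 5 2 m (by norm_num) (by norm_num) h).trans_lt ?_)
      rw [BB_eq _ _ (by norm_num)]
      norm_num [PP, Finset.prod_range_succ, Nat.factorial]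
    · refine gt_lt_one _ _ hn hm ((BB_mono_m 6 2 m (by norm_num) (by norm_num) h).trans_lt ?_)
      rw [BB_eq _ _ (by norm_num)]
      norm_num [PP, Finset.prod_range_succ, Nat.factorial]
  · refine gt_lt_one _ _ hn hm (((BB_mono_m n 1 m (by omega) le_rfl hm).trans
      (BB_mono_n 7 n (by norm_num) h7)).trans_lt ?_)
    rw [BB_eq _ _ (by norm_num)]
    norm_num [PP, Finset.prod_range_succ, Nat.factorial]
end
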